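/- For every positive integer k and every finite set U_M ⊂ U(4) that is closed under taking inverses and whose elements have only entries algebraic over ℚ, there exists a choice of a finite set U_{B/M} ⊂ U(4) (with U_B = U_M ∪ U_{B/M} a partially invertible universal set) such that the relaxed seed U^k = U_{B^k} ∖ U_{M^k} satisfies: (a) U^k contains a unitary having at least one matrix entry that is not algebraic over ℚ, and (b) no element of U^k has its inverse in U^k (i.e., for all U, U' ∈ U^k, U' ≠ U†). -/

import Mathlib

open Matrix
open scoped Classical

noncomputable section

/-- The set of all products `f 0 * f 1 * ⋯ * f (k-1)` of length `k` with every factor in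
`S`. -/
def wordSet {G : Type*} [Monoid G] (S : Set G) (k : ℕ) : Set G :=
  { U | ∃ f : Fin k → G, (∀ i, f i ∈ S) ∧ U = (List.ofFn f).prod }

/-!
Fix `z` on the unit circle transcendental over `K`, and take as gates `U_{B/M}` complex reflections
with multiplier `z`. Each of them has determinant `z`, while the elements of `U_M` have algebraic
determinant, so modulo algebraic factors the determinant of a word is `z ^ m`, where `m` counts its
factors outside `U_M`. In the seed `m` is positive: determinants there are transcendental, and
since exponents only add up, two elements of the seed are never inverse to each other.

As `z` is not a root of unity, the closure of the generated group contains every complex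
reflection along the axis of each gate. The reflection along `u - w` that carries `u` to a vector
`w` of the same norm conjugates the reflections along `u` to those along `w`; starting from the
axes `eᵢ + eⱼ` this produces all axes, and complex reflections generate `U(n)`.
-/

section RelaxedSeed

/-- The relaxed seed `𝒰^k = 𝒰_{B^k} ∖ 𝒰_{M^k}` of the paper, with `S` for `U_M` and `T` for
`U_{B/M}`: the products of `k` gates that cannot be written with gates of `S` alone. -/
def relaxedSeed {G : Type*} [Monoid G] (S T : Set G) (k : ℕ) : Set G :=
  wordSet (S ∪ T) k \ wordSet S k

variable {G Q : Type*} [Monoid Q] {S T : Set G} {k : ℕ}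

section Monoid

variable [Monoid G] {φ : G →* Q} {t : Q} {U : G}

theorem pow_mem_wordSet (hU : U ∈ S) (k : ℕ) : U ^ k ∈ wordSet S k :=
  ⟨fun _ => U, fun _ => hU, by rw [List.ofFn_const, List.prod_replicate]⟩

theorem map_eq_one_of_mem_wordSet (hS : ∀ s ∈ S, φ s = 1) (hU : U ∈ wordSet S k) : φ U = 1 := by
  obtain ⟨f, hf, rfl⟩ := hU
  rw [map_list_prod, List.map_ofFn]
  exact List.prod_eq_one (List.forall_mem_ofFn_iff.2 fun i => hS _ (hf i))

theorem pow_mem_relaxedSeed (hS : ∀ s ∈ S, φ s = 1) (hU : U ∈ T) (hφ : φ (U ^ k) ≠ 1) :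
    U ^ k ∈ relaxedSeed S T k :=
  ⟨pow_mem_wordSet (Set.mem_union_right S hU) k, fun h => hφ (map_eq_one_of_mem_wordSet hS h)⟩

theorem exists_map_list_prod_eq_pow (hS : ∀ s ∈ S, φ s = 1) (hT : ∀ s ∈ T, φ s = t) (L : List G)
    (hL : ∀ x ∈ L, x ∈ S ∪ T) : ∃ m : ℕ, φ L.prod = t ^ m ∧ (m = 0 → ∀ x ∈ L, x ∈ S) := by
  induction L with
  | nil => exact ⟨0, by simp, by simp⟩
  | cons x L ih =>
    obtain ⟨hx, hL⟩ := List.forall_mem_cons.1 hL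
    obtain ⟨m, hm, hmS⟩ := ih hL
    rw [List.prod_cons, map_mul, hm]
    rcases hx with hx | hx
    · exact ⟨m, by rw [hS x hx, one_mul], fun h0 => List.forall_mem_cons.2 ⟨hx, hmS h0⟩⟩
    · exact ⟨m + 1, by rw [hT x hx, pow_succ'], fun h0 => absurd h0 m.succ_ne_zero⟩

theorem exists_map_eq_pow_of_mem_relaxedSeed (hS : ∀ s ∈ S, φ s = 1) (hT : ∀ s ∈ T, φ s = t)
    (hU : U ∈ relaxedSeed S T k) : ∃ m : ℕ, 0 < m ∧ φ U = t ^ m := by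
  obtain ⟨⟨f, hf, rfl⟩, hfS⟩ := hU
  obtain ⟨m, hm, hmS⟩ := exists_map_list_prod_eq_pow hS hT (List.ofFn f) (by simpa using hf)
  exact ⟨m, Nat.pos_of_ne_zero fun h0 => hfS ⟨f, by simpa using hmS h0, rfl⟩, hm⟩

end Monoid

theorem ne_inv_of_mem_relaxedSeed [Group G] {φ : G →* Q} {t : Q} (ht : ¬ IsOfFinOrder t)
    (hS : ∀ s ∈ S, φ s = 1) (hT : ∀ s ∈ T, φ s = t) {U U' : G} (hU : U ∈ relaxedSeed S T k)
    (hU' : U' ∈ relaxedSeed S T k) : U' ≠ U⁻¹ := by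
  intro h
  obtain ⟨m, hm, hφ⟩ := exists_map_eq_pow_of_mem_relaxedSeed hS hT hU
  obtain ⟨m', -, hφ'⟩ := exists_map_eq_pow_of_mem_relaxedSeed hS hT hU'
  refine ht (isOfFinOrder_iff_pow_eq_one.2 ⟨m' + m, by omega, ?_⟩)
  rw [pow_add, ← hφ', ← hφ, ← map_mul, h, inv_mul_cancel, map_one]

end RelaxedSeed

section DetClass

/-- The group of nonzero elements of `L` that are algebraic over `K`, as a subgroup of `Lˣ`. -/
def algebraicUnits (K L : Type*) [Field K] [Field L] [Algebra K L] : Subgroup Lˣ where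
  carrier := {u | IsAlgebraic K (u : L)}
  one_mem' := isAlgebraic_one
  mul_mem' := IsAlgebraic.mul
  inv_mem' {u} hu := by simpa using hu.inv

variable {K L n : Type*} [Field K] [Field L] [Algebra K L] [Fintype n] [DecidableEq n]

theorem not_isOfFinOrder_mk_algebraicUnits {u : Lˣ} (hu : Transcendental K (u : L)) :
    ¬ IsOfFinOrder (u : Lˣ ⧸ algebraicUnits K L) := by
  rw [isOfFinOrder_iff_pow_eq_one]
  rintro ⟨m, hm, h⟩
  have hpow : IsAlgebraic K ((u : L) ^ m) :=
    (QuotientGroup.eq_one_iff (N := algebraicUnits K L) (u ^ m)).1 h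
  exact hu (hpow.of_pow hm)

theorem isAlgebraic_det {A : Matrix n n L} (hA : ∀ i j, IsAlgebraic K (A i j)) :
    IsAlgebraic K A.det := by
  simp only [← mem_algebraicClosure_iff (E := L)] at hA ⊢
  rw [det_apply]
  exact sum_mem fun σ _ => zsmul_mem (prod_mem fun i _ => hA _ _) _

variable [StarRing L]

variable (K L n) in
/-- The determinant of a unitary matrix modulo algebraic factors; it is nontrivial exactly when the
determinant is transcendental. -/
def detClass : unitaryGroup n L →* Lˣ ⧸ algebraicUnits K L :=
  (QuotientGroup.mk' _).comp ((Units.map detMonoidHom).comp (Unitary.toUnits (R := Matrix n n L)))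

theorem detClass_eq_mk {U : unitaryGroup n L} {u : Lˣ} (h : (U : Matrix n n L).det = u) :
    detClass K L n U = u :=
  congrArg (QuotientGroup.mk' (algebraicUnits K L)) (Units.ext h)

theorem detClass_eq_one_iff {U : unitaryGroup n L} :
    detClass K L n U = 1 ↔ IsAlgebraic K (U : Matrix n n L).det :=
  QuotientGroup.eq_one_iff _

end DetClass

section Circle

theorem exists_circle_mul_eq {x y : ℂ} (h : ‖x‖ = ‖y‖) : ∃ c : Circle, c * x = y := by
  rcases eq_or_ne x 0 with rfl | hx
  · exact ⟨1, by simpa [eq_comm] using h⟩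
  · have : ‖y / x‖ = 1 := by rw [norm_div, h, div_self (h ▸ norm_ne_zero_iff.2 hx)]
    exact ⟨⟨y / x, mem_sphere_zero_iff_norm.2 this⟩, div_mul_cancel₀ y hx⟩

theorem exists_circle_mul_re_eq_zero (x : ℂ) : ∃ α : Circle, (α * x).re = 0 := by
  obtain ⟨α, hα⟩ := exists_circle_mul_eq (x := x) (y := ‖x‖ * Complex.I) (by simp)
  exact ⟨α, by simp [hα]⟩

theorem uncountable_circle : Uncountable Circle := by
  have : Uncountable (Set.Ioc (-Real.pi) Real.pi) := by
    rw [← Cardinal.aleph0_lt_mk_iff, Cardinal.mk_Ioc_real (by linarith [Real.pi_pos])]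
    exact Cardinal.aleph0_lt_continuum
  exact Circle.argEquiv.symm.injective.uncountable

theorem exists_transcendental_circle (K : Type*) [Field K] [Countable K] [Algebra K ℂ] :
    ∃ z : Circle, Transcendental K (z : ℂ) := by
  by_contra! h
  have : (Set.univ : Set Circle).Countable :=
    ((Algebraic.countable K ℂ).preimage Circle.coe_injective).mono fun z _ => not_not.1 (h z)
  exact Set.not_countable_univ_iff.2 uncountable_circle this

theorem denseRange_zpow_circle {z : Circle} (hz : ¬ IsOfFinOrder z) :
    DenseRange fun m : ℤ => z ^ m := by
  let e := AddCircle.homeomorphCircle (one_ne_zero (α := ℝ))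
  obtain ⟨a, rfl⟩ := e.surjective z
  have ha : addOrderOf a = 0 := addOrderOf_eq_zero fun h => hz <| by
    rw [isOfFinAddOrder_iff_nsmul_eq_zero] at h
    obtain ⟨m, hm, hma⟩ := h
    refine isOfFinOrder_iff_pow_eq_one.2 ⟨m, hm, ?_⟩
    simp [e, AddCircle.homeomorphCircle_apply, ← AddCircle.toCircle_nsmul, hma]
  convert! e.surjective.denseRange.comp (AddCircle.denseRange_zsmul_iff.2 ha) e.continuous using 2
  simp [e, AddCircle.homeomorphCircle_apply, ← AddCircle.toCircle_zsmul]

theorem map_circle_mem_of_isClosed {G : Type*} [Group G] [TopologicalSpace G] {H : Subgroup G}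
    (hH : IsClosed (H : Set G)) {f : Circle →* G} (hf : Continuous f) {z : Circle}
    (hz : ¬ IsOfFinOrder z) (hzH : f z ∈ H) (c : Circle) : f c ∈ H :=
  (denseRange_zpow_circle hz).induction_on (p := fun c => f c ∈ H) c (hH.preimage hf) fun m => by
    rw [map_zpow]
    exact H.zpow_mem hzH m

end Circle

section Unitary

variable {n R : Type*} [Fintype n] [DecidableEq n] [CommRing R] [StarRing R]

theorem star_unitary_mulVec_vecMul (g : unitaryGroup n R) (v : n → R) :
    star ((g : Matrix n n R) *ᵥ v) ᵥ* (g : Matrix n n R) = star v := by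
  rw [star_mulVec, vecMul_vecMul, ← star_eq_conjTranspose, UnitaryGroup.star_mul_self, vecMul_one]

theorem dotProduct_star_unitary_mulVec (g : unitaryGroup n R) (x y : n → R) :
    star ((g : Matrix n n R) *ᵥ x) ⬝ᵥ ((g : Matrix n n R) *ᵥ y) = star x ⬝ᵥ y := by
  rw [dotProduct_mulVec, star_unitary_mulVec_vecMul]

end Unitary

section Reflection

open scoped ComplexConjugate ComplexOrder

variable {n : Type*} [Fintype n] [DecidableEq n]

/-- The matrix of the complex reflection along `v` with multiplier `c`: it multiplies `v` by `c` and
fixes the orthogonal complement of `v`. For `v = 0` the division by zero makes it the identity. -/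
def complexReflectionMatrix (v : n → ℂ) (c : ℂ) : Matrix n n ℂ :=
  1 + ((c - 1) / (star v ⬝ᵥ v)) • vecMulVec v (star v)

theorem complexReflectionMatrix_mulVec (v : n → ℂ) (c : ℂ) (x : n → ℂ) :
    complexReflectionMatrix v c *ᵥ x = x + ((c - 1) / (star v ⬝ᵥ v) * (star v ⬝ᵥ x)) • v := by
  simp only [complexReflectionMatrix, add_mulVec, one_mulVec, smul_mulVec, vecMulVec_mulVec,
    op_smul_eq_smul, smul_smul]

theorem complexReflectionMatrix_one (v : n → ℂ) : complexReflectionMatrix v 1 = 1 := by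
  simp [complexReflectionMatrix]

theorem complexReflectionMatrix_zero (c : ℂ) : complexReflectionMatrix (0 : n → ℂ) c = 1 := by
  simp [complexReflectionMatrix]

theorem complexReflectionMatrix_mul (v : n → ℂ) (c d : ℂ) :
    complexReflectionMatrix v (c * d) =
      complexReflectionMatrix v c * complexReflectionMatrix v d := by
  rcases eq_or_ne v 0 with rfl | hv
  · simp only [complexReflectionMatrix_zero, mul_one]
  have hN : star v ⬝ᵥ v ≠ 0 := dotProduct_star_self_eq_zero.not.2 hv
  simp only [complexReflectionMatrix, mul_add, add_mul, one_mul, mul_one, smul_mul_smul_comm,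
    vecMulVec_mul_vecMulVec, vecMulVec_smul, smul_smul, add_assoc, ← add_smul]
  congr 2
  field_simp
  ring

theorem star_complexReflectionMatrix (v : n → ℂ) (c : ℂ) :
    star (complexReflectionMatrix v c) = complexReflectionMatrix v (conj c) := by
  have hN : conj (star v ⬝ᵥ v) = star v ⬝ᵥ v := (star_dotProduct v v).symm
  simp [complexReflectionMatrix, star_eq_conjTranspose, conjTranspose_vecMulVec, hN]

theorem det_complexReflectionMatrix {v : n → ℂ} (hv : v ≠ 0) (c : ℂ) :
    (complexReflectionMatrix v c).det = c := by
  have hN : star v ⬝ᵥ v ≠ 0 := dotProduct_star_self_eq_zero.not.2 hv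
  rw [complexReflectionMatrix, ← smul_vecMulVec, vecMulVec_eq Unit,
    det_one_add_replicateCol_mul_replicateRow, dotProduct_smul, smul_eq_mul, div_mul_cancel₀ _ hN,
    add_sub_cancel]

theorem continuous_complexReflectionMatrix (v : n → ℂ) :
    Continuous (complexReflectionMatrix v) := by
  unfold complexReflectionMatrix
  fun_prop

theorem complexReflectionMatrix_smul {a : ℂ} (ha : a ≠ 0) (v : n → ℂ) (c : ℂ) :
    complexReflectionMatrix (a • v) c = complexReflectionMatrix v c := by
  rcases eq_or_ne v 0 with rfl | hv
  · rw [smul_zero]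
  have hN : star v ⬝ᵥ v ≠ 0 := dotProduct_star_self_eq_zero.not.2 hv
  have ha' : star a ≠ 0 := star_ne_zero.2 ha
  simp only [complexReflectionMatrix, star_smul, smul_dotProduct, dotProduct_smul,
    smul_vecMulVec, vecMulVec_smul, smul_smul, smul_eq_mul]
  congr 2
  field_simp

/-- The complex reflections along a fixed `v`, as a homomorphism from the circle of multipliers to
the unitary group. -/
def complexReflection (v : n → ℂ) : Circle →* unitaryGroup n ℂ where
  toFun c := ⟨complexReflectionMatrix v c, by
    rw [mem_unitaryGroup_iff, star_complexReflectionMatrix, ← complexReflectionMatrix_mul,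
      Complex.mul_conj, Circle.normSq_coe, Complex.ofReal_one, complexReflectionMatrix_one]⟩
  map_one' := Subtype.ext (complexReflectionMatrix_one v)
  map_mul' c d := Subtype.ext (complexReflectionMatrix_mul v c d)

theorem continuous_complexReflection (v : n → ℂ) : Continuous (complexReflection v) :=
  ((continuous_complexReflectionMatrix v).comp continuous_subtype_val).subtype_mk _

theorem complexReflection_unitary_mulVec (g : unitaryGroup n ℂ) (v : n → ℂ) (c : Circle) :
    complexReflection ((g : Matrix n n ℂ) *ᵥ v) c = g * complexReflection v c * g⁻¹ := by
  refine eq_mul_inv_of_mul_eq (Subtype.ext ?_)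
  change complexReflectionMatrix _ (c : ℂ) * (g : Matrix n n ℂ) =
    (g : Matrix n n ℂ) * complexReflectionMatrix v (c : ℂ)
  simp only [complexReflectionMatrix, dotProduct_star_unitary_mulVec, add_mul, mul_add, one_mul,
    mul_one, Matrix.smul_mul, Matrix.mul_smul, vecMulVec_mul, mul_vecMulVec,
    star_unitary_mulVec_vecMul]

theorem exists_complexReflection_mulVec_eq {u w : n → ℂ} (h : star u ⬝ᵥ u = star w ⬝ᵥ w) :
    ∃ c, (complexReflection (u - w) c : Matrix n n ℂ) *ᵥ u = w := by
  set d := star (u - w) ⬝ᵥ u with hd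
  obtain ⟨c, hc⟩ : ∃ c : Circle, c * d = -conj d :=
    exists_circle_mul_eq (by rw [norm_neg, RCLike.norm_conj])
  refine ⟨c, (complexReflectionMatrix_mulVec _ _ _).trans ?_⟩
  rcases eq_or_ne u w with rfl | huw
  · simp
  have hN : star (u - w) ⬝ᵥ (u - w) ≠ 0 := dotProduct_star_self_eq_zero.not.2 (sub_ne_zero.2 huw)
  have hNd : star (u - w) ⬝ᵥ (u - w) = d + conj d := by
    have hd' : conj d = star u ⬝ᵥ (u - w) := (star_dotProduct u (u - w)).symm
    rw [hd', hd]
    simp only [star_sub, sub_dotProduct, dotProduct_sub, h]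
    ring
  have hcoef : (c - 1) / (star (u - w) ⬝ᵥ (u - w)) * d = -1 := by
    rw [div_mul_eq_mul_div, div_eq_iff hN, hNd]
    linear_combination hc
  rw [hcoef, neg_one_smul]
  abel

theorem complexReflection_mulVec_of_orthogonal {v x : n → ℂ} (h : star v ⬝ᵥ x = 0) (c : Circle) :
    (complexReflection v c : Matrix n n ℂ) *ᵥ x = x :=
  (complexReflectionMatrix_mulVec v c x).trans (by rw [h, mul_zero, zero_smul, add_zero])

/-- `H` contains all complex reflections along `v`. The vector `0` counts as an axis of every
subgroup. -/
def IsReflectionAxis (H : Subgroup (unitaryGroup n ℂ)) (v : n → ℂ) : Prop :=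
  ∀ c, complexReflection v c ∈ H

namespace IsReflectionAxis

variable {H : Subgroup (unitaryGroup n ℂ)} {v : n → ℂ}

theorem zero : IsReflectionAxis H 0 := fun c => by
  convert H.one_mem
  exact Subtype.ext (complexReflectionMatrix_zero c)

theorem smul (hv : IsReflectionAxis H v) (a : ℂ) : IsReflectionAxis H (a • v) := by
  rcases eq_or_ne a 0 with rfl | ha
  · rw [zero_smul]
    exact zero
  · intro c
    convert hv c using 1
    exact Subtype.ext (complexReflectionMatrix_smul ha v c)

theorem of_sub {u w : n → ℂ} (hsub : IsReflectionAxis H (u - w)) (hw : IsReflectionAxis H w)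
    (h : star u ⬝ᵥ u = star w ⬝ᵥ w) : IsReflectionAxis H u := by
  obtain ⟨d, hd⟩ := exists_complexReflection_mulVec_eq h
  intro c
  have hc := hw c
  rw [← hd, complexReflection_unitary_mulVec] at hc
  rwa [H.mul_mem_cancel_right (H.inv_mem (hsub d)), H.mul_mem_cancel_left (hsub d)] at hc

theorem of_update {j : n} {α : Circle} (hj : IsReflectionAxis H (Pi.single j 1))
    (hv : IsReflectionAxis H (Function.update v j (α * v j))) : IsReflectionAxis H v := by
  refine of_sub ?_ hv (Finset.sum_congr rfl fun i _ => ?_)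
  · convert hj.smul ((1 - α) * v j) using 1
    ext i
    by_cases hi : i = j
    · subst hi
      simp only [Pi.sub_apply, Function.update_self, Pi.smul_apply, Pi.single_eq_same,
        smul_eq_mul, mul_one]
      ring
    · simp [hi]
  · by_cases hi : i = j
    · subst hi
      have hα : conj (α : ℂ) * α = 1 := by rw [Complex.conj_mul', Circle.norm_coe]; norm_num
      simp only [Pi.star_apply, RCLike.star_def, Function.update_self, star_mul']
      linear_combination -(conj (v i) * v i) * hα
    · simp [hi]

theorem of_sub_smul_add {j l : n} (hjl : j ≠ l)
    (hadd : IsReflectionAxis H (Pi.single j 1 + Pi.single l 1)) (hre : (v j * conj (v l)).re = 0)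
    (hv : IsReflectionAxis H (v - v l • (Pi.single j 1 + Pi.single l 1))) :
    IsReflectionAxis H v := by
  refine of_sub ?_ hv ?_
  · rw [sub_sub_cancel]
    exact hadd.smul (v l)
  · have hre' : v j * conj (v l) + conj (v j) * v l = 0 := by
      have := Complex.add_conj (v j * conj (v l))
      simpa [hre] using this
    simp only [star_sub, star_smul, star_add, Pi.star_single, star_one, sub_dotProduct,
      dotProduct_sub, smul_dotProduct, dotProduct_smul, add_dotProduct, dotProduct_add,
      single_dotProduct, dotProduct_single, Pi.sub_apply, Pi.smul_apply, Pi.star_apply,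
      Pi.add_apply, Pi.single_eq_same, Pi.single_eq_of_ne hjl, Pi.single_eq_of_ne hjl.symm,
      RCLike.star_def, smul_eq_mul, one_mul, mul_one, add_zero, zero_add]
    linear_combination hre'

end IsReflectionAxis

variable {H : Subgroup (unitaryGroup n ℂ)}

theorem isReflectionAxis_single (h : ∀ i j, IsReflectionAxis H (Pi.single i 1 + Pi.single j 1))
    (j : n) : IsReflectionAxis H (Pi.single j 1) := by
  convert (h j j).smul (1 / 2) using 1
  rw [← two_smul ℂ, smul_smul]
  norm_num

theorem isReflectionAxis_of_support_subset
    (h : ∀ i j, IsReflectionAxis H (Pi.single i 1 + Pi.single j 1)) (s : Finset n) (v : n → ℂ)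
    (hv : ∀ i ∉ s, v i = 0) : IsReflectionAxis H v := by
  induction s using Finset.induction_on generalizing v with
  | empty =>
    rw [show v = 0 from funext fun i => hv i (Finset.notMem_empty i)]
    exact .zero
  | insert l s hl ih =>
    rcases s.eq_empty_or_nonempty with rfl | ⟨j, hj⟩
    · have hvl : v = v l • Pi.single l 1 := by
        ext i
        by_cases hi : i = l
        · subst hi; simp
        · simp [hi, hv i (by simpa using hi)]
      rw [hvl]
      exact (isReflectionAxis_single h l).smul (v l)
    · have hjl : j ≠ l := ne_of_mem_of_not_mem hj hl
      -- With `α * v j` orthogonal to `v l` over `ℝ`, subtracting `v l • (e_j + e_l)` preserves the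
      -- norm, and it moves the `l`-th coordinate into the `j`-th.
      obtain ⟨α, hα⟩ := exists_circle_mul_re_eq_zero (v j * conj (v l))
      refine .of_update (α := α) (isReflectionAxis_single h j) (.of_sub_smul_add hjl (h j l) ?_
        (ih _ fun i hi => ?_))
      · simpa [hjl.symm, mul_assoc] using hα
      · have hij : i ≠ j := (ne_of_mem_of_not_mem hj hi).symm
        by_cases hil : i = l
        · subst hil; simp [hij]
        · simp [hij, hil, hv i (by simp [hil, hi])]

theorem eq_top_of_forall_isReflectionAxis (h : ∀ v, IsReflectionAxis H v) : H = ⊤ := by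
  refine (Subgroup.eq_top_iff' H).2 fun U => ?_
  have exists_fixing (s : Finset n) : ∃ g ∈ H, ∀ i ∈ s,
      ((g * U : unitaryGroup n ℂ) : Matrix n n ℂ) *ᵥ Pi.single i 1 = Pi.single i 1 := by
    induction s using Finset.induction_on with
    | empty => exact ⟨1, H.one_mem, by simp⟩
    | insert j s hj ih =>
      obtain ⟨g, hg, hfix⟩ := ih
      obtain ⟨c, hc⟩ := exists_complexReflection_mulVec_eq
        (dotProduct_star_unitary_mulVec (g * U) (Pi.single j 1) (Pi.single j 1))
      set u := ((g * U : unitaryGroup n ℂ) : Matrix n n ℂ) *ᵥ Pi.single j 1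
      refine ⟨complexReflection (u - Pi.single j 1) c * g, H.mul_mem (h _ c) hg, fun i hi => ?_⟩
      rw [mul_assoc, UnitaryGroup.mul_val, ← mulVec_mulVec]
      rcases Finset.mem_insert.1 hi with rfl | his
      · exact hc
      · have horth := dotProduct_star_unitary_mulVec (g * U) (Pi.single j 1) (Pi.single i 1)
        rw [hfix i his] at horth ⊢
        exact complexReflection_mulVec_of_orthogonal
          (by rw [star_sub, sub_dotProduct, horth, sub_self]) c
  obtain ⟨g, hg, hfix⟩ := exists_fixing Finset.univ
  have hgU : g * U = 1 := Subtype.ext <| ext_of_mulVec_single fun i => by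
    rw [hfix i (Finset.mem_univ i), UnitaryGroup.one_val, one_mulVec]
  rw [eq_inv_of_mul_eq_one_right hgU]
  exact H.inv_mem hg

end Reflection

section Universal

open scoped ComplexOrder

variable {n : Type*} [Fintype n] [DecidableEq n] {z : Circle}

variable (n) in
/-- A finite set of gates generating a dense subgroup of `U(n)` when `z` has infinite order: the
complex reflections with multiplier `z` along all `eᵢ + eⱼ`. The pairs `(i, i)` supply the
reflections along the basis vectors, as the axis only matters up to scaling. -/
def universalReflections (z : Circle) : Finset (unitaryGroup n ℂ) :=
  Finset.univ.image fun p : n × n => complexReflection (Pi.single p.1 1 + Pi.single p.2 1) z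

theorem mem_universalReflections {U : unitaryGroup n ℂ} :
    U ∈ universalReflections n z ↔
      ∃ i j, complexReflection (Pi.single i 1 + Pi.single j 1) z = U := by
  simp [universalReflections]

theorem universalReflections_nonempty [Nonempty n] : (universalReflections n z).Nonempty :=
  Finset.univ_nonempty.image _

theorem det_of_mem_universalReflections {U : unitaryGroup n ℂ}
    (hU : U ∈ universalReflections n z) : (U : Matrix n n ℂ).det = z := by
  obtain ⟨i, j, rfl⟩ := mem_universalReflections.1 hU
  have hpos : (0 : n → ℂ) < Pi.single i 1 + Pi.single j 1 :=
    add_pos (Pi.single_pos.2 one_pos) (Pi.single_pos.2 one_pos)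
  exact det_complexReflectionMatrix hpos.ne' z

theorem dense_closure_universalReflections (hz : ¬ IsOfFinOrder z) :
    Dense (Subgroup.closure (universalReflections n z : Set (unitaryGroup n ℂ)) :
      Set (unitaryGroup n ℂ)) := by
  set H := Subgroup.closure (universalReflections n z : Set (unitaryGroup n ℂ))
  have haxis (i j : n) : IsReflectionAxis H.topologicalClosure (Pi.single i 1 + Pi.single j 1) :=
    map_circle_mem_of_isClosed H.isClosed_topologicalClosure (continuous_complexReflection _) hz
      (H.le_topologicalClosure (Subgroup.subset_closure (mem_universalReflections.2 ⟨i, j, rfl⟩)))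
  have htop : H.topologicalClosure = ⊤ := eq_top_of_forall_isReflectionAxis fun v =>
    isReflectionAxis_of_support_subset haxis Finset.univ v (by simp)
  exact dense_iff_closure_eq.2 (congrArg SetLike.coe htop)

end Universal

theorem relaxed_seed_exists_general (K : Type*) [Field K] [Countable K] [Algebra K ℂ]
    {n : Type*} [Fintype n] [DecidableEq n] [Nonempty n] (k : ℕ) (hk : 1 ≤ k)
    (UM : Set (unitaryGroup n ℂ)) (hM : ∀ U ∈ UM, IsAlgebraic K (U : Matrix n n ℂ).det) :
    ∃ UBM : Finset (unitaryGroup n ℂ),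
      Disjoint UM ↑UBM ∧ UBM.Nonempty ∧
      Dense (Subgroup.closure (UM ∪ ↑UBM) : Set (unitaryGroup n ℂ)) ∧
      (∃ U ∈ relaxedSeed UM ↑UBM k, ∃ i j, ¬ IsAlgebraic K ((U : Matrix n n ℂ) i j)) ∧
      (∀ U ∈ relaxedSeed UM ↑UBM k, ∀ U' ∈ relaxedSeed UM ↑UBM k, U' ≠ U⁻¹) := by
  obtain ⟨z, hz⟩ := exists_transcendental_circle K
  let t : ℂˣ ⧸ algebraicUnits K ℂ := (Circle.toUnits z : ℂˣ)
  have ht : ¬ IsOfFinOrder t := not_isOfFinOrder_mk_algebraicUnits hz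
  have hz_order : ¬ IsOfFinOrder z := fun h =>
    ht (((QuotientGroup.mk' _).comp Circle.toUnits).isOfFinOrder h)
  have htk : t ^ k ≠ 1 := fun h => ht (isOfFinOrder_iff_pow_eq_one.2 ⟨k, hk, h⟩)
  have hS : ∀ U ∈ UM, detClass K ℂ n U = 1 := fun U hU => detClass_eq_one_iff.2 (hM U hU)
  have hT : ∀ U ∈ (universalReflections n z : Set (unitaryGroup n ℂ)), detClass K ℂ n U = t :=
    fun U hU => detClass_eq_mk (det_of_mem_universalReflections hU)
  refine ⟨universalReflections n z, ?disjoint, universalReflections_nonempty,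
    (dense_closure_universalReflections hz_order).mono
      (Subgroup.closure_mono Set.subset_union_right), ?transcendental,
    fun U hU U' hU' => ne_inv_of_mem_relaxedSeed ht hS hT hU hU'⟩
  case disjoint =>
    exact Set.disjoint_left.2 fun U hUM hU =>
      ht (isOfFinOrder_iff_pow_eq_one.2 ⟨1, one_pos, by rw [pow_one, ← hT U hU, hS U hUM]⟩)
  case transcendental =>
    obtain ⟨U, hU⟩ := universalReflections_nonempty (n := n) (z := z)
    have hUk : detClass K ℂ n (U ^ k) ≠ 1 := by rwa [map_pow, hT U hU]
    refine ⟨U ^ k, pow_mem_relaxedSeed hS hU hUk, ?_⟩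
    contrapose! hUk
    exact detClass_eq_one_iff.2 (isAlgebraic_det hUk)

/-- Theorem 2 of the paper: for every `k ≥ 1` and every finite nonempty
`U_M ⊂ U(4)` that is closed under inverses and consists of matrices with entries algebraic
over `ℚ`, there is a finite set `U_{B/M} ⊂ U(4)`, disjoint from `U_M`, such that
`U_B = U_M ∪ U_{B/M}` generates a dense subgroup of `U(4)` (so `U_B` is a partially
invertible universal set) and the relaxed seed `𝒰^k = 𝒰_{B^k} ∖ 𝒰_{M^k}` satisfies:
(a) some element of `𝒰^k` has a matrix entry that is not algebraic over `ℚ`, and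
(b) no element of `𝒰^k` has its inverse (= conjugate transpose) in `𝒰^k`. -/
theorem relaxed_seed_exists
    (k : ℕ) (hk : 1 ≤ k)
    (UM : Finset (Matrix.unitaryGroup (Fin 4) ℂ)) (hMne : UM.Nonempty)
    (hMinv : ∀ U ∈ UM, U⁻¹ ∈ UM)
    (hMalg : ∀ U ∈ UM, ∀ i j, IsAlgebraic ℚ ((U : Matrix (Fin 4) (Fin 4) ℂ) i j)) :
    ∃ UBM : Finset (Matrix.unitaryGroup (Fin 4) ℂ),
      Disjoint UM UBM ∧ UBM.Nonempty ∧
      Dense ((Subgroup.closure ((↑UM ∪ ↑UBM : Set (Matrix.unitaryGroup (Fin 4) ℂ))) :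
          Subgroup (Matrix.unitaryGroup (Fin 4) ℂ)) :
            Set (Matrix.unitaryGroup (Fin 4) ℂ)) ∧
      (∃ U ∈ wordSet (↑UM ∪ ↑UBM : Set (Matrix.unitaryGroup (Fin 4) ℂ)) k \
            wordSet (↑UM : Set (Matrix.unitaryGroup (Fin 4) ℂ)) k,
        ∃ i j, ¬ IsAlgebraic ℚ ((U : Matrix (Fin 4) (Fin 4) ℂ) i j)) ∧
      (∀ U ∈ wordSet (↑UM ∪ ↑UBM : Set (Matrix.unitaryGroup (Fin 4) ℂ)) k \
            wordSet (↑UM : Set (Matrix.unitaryGroup (Fin 4) ℂ)) k,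
        ∀ U' ∈ wordSet (↑UM ∪ ↑UBM : Set (Matrix.unitaryGroup (Fin 4) ℂ)) k \
            wordSet (↑UM : Set (Matrix.unitaryGroup (Fin 4) ℂ)) k,
          U' ≠ U⁻¹) := by
  obtain ⟨UBM, hdisj, h⟩ := relaxed_seed_exists_general ℚ k hk (UM : Set (unitaryGroup (Fin 4) ℂ))
    fun U hU => isAlgebraic_det (hMalg U hU)
  exact ⟨UBM, Finset.disjoint_coe.1 hdisj, h⟩

end
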